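/- Let f : ℝⁿ × ℝ^d → ℝⁿ be C¹, and let Λ : ℝ → ℝ^d be C¹ and exponentially bi-asymptotically constant with decay coefficient ρ > 0, with limits λ^± at ±∞. Suppose η⁺ ∈ ℝⁿ satisfies f(η⁺, λ⁺) = 0 and the characteristic polynomial of D_x f(η⁺, λ⁺) has exactly one complex root (counted with multiplicity) with positive real part, and all of its remaining complex roots have negative real part. Then for every r > 0 and α ∈ (0, ρ], the characteristic polynomial of the Fréchet derivative of F_{r,α} at (η⁺, 1) (within ℝⁿ × [−1,1]) has exactly one complex root (with multiplicity) with positive real part, and all of its remaining n complex roots have negative real part. -/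

import Mathlib

open Filter Topology

/-- The time compactification map `g_α(τ) = tanh(ατ/2)`. -/
noncomputable def gcomp (α τ : ℝ) : ℝ := Real.tanh (α * τ / 2)

/-- Its inverse `h_α(s) = (1/α)·ln((1+s)/(1-s))`. -/
noncomputable def hcomp (α s : ℝ) : ℝ := (1 / α) * Real.log ((1 + s) / (1 - s))

/-- `Λ : ℝ → ℝ^d` is exponentially bi-asymptotically constant with decay coefficient `ρ`:
both limits `lim_{τ→+∞} Λ'(τ)·e^{ρτ}` and `lim_{τ→-∞} Λ'(τ)·e^{-ρτ}` exist. -/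
def ExpBiAsympConst {d : ℕ} (Λ : ℝ → Fin d → ℝ) (ρ : ℝ) : Prop :=
  (∃ Lp : Fin d → ℝ, Tendsto (fun τ => Real.exp (ρ * τ) • deriv Λ τ) atTop (𝓝 Lp)) ∧
  (∃ Lm : Fin d → ℝ, Tendsto (fun τ => Real.exp (-ρ * τ) • deriv Λ τ) atBot (𝓝 Lm))

/-- The compactified input `Λ_α : [-1,1] → ℝ^d`, equal to `Λ ∘ h_α` on `(-1,1)` and to the
future/past limits `lp`, `lm` at `s = 1`, `s = -1` respectively. -/
noncomputable def compInput {d : ℕ} (Λ : ℝ → Fin d → ℝ) (lp lm : Fin d → ℝ)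
    (α s : ℝ) : Fin d → ℝ :=
  if s = 1 then lp else if s = -1 then lm else Λ (hcomp α s)

/-- The compactified vector field `F_{r,α}(x,s) = (f(x,Λ_α(s))/r, α(1-s²)/2)` on `ℝⁿ × [-1,1]`. -/
noncomputable def compField {n d : ℕ} (f : (Fin n → ℝ) × (Fin d → ℝ) → Fin n → ℝ)
    (Λ : ℝ → Fin d → ℝ) (lp lm : Fin d → ℝ) (r α : ℝ) :
    (Fin n → ℝ) × ℝ → (Fin n → ℝ) × ℝ :=
  fun p => (r⁻¹ • f (p.1, compInput Λ lp lm α p.2), α * (1 - p.2 ^ 2) / 2)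

/-- The extended phase space `ℝⁿ × [-1,1]`. -/
def compDomain (n : ℕ) : Set ((Fin n → ℝ) × ℝ) := Set.univ ×ˢ Set.Icc (-1) 1

/-- The multiset of complex roots (with multiplicity) of a real polynomial. -/
noncomputable def complexRoots (p : Polynomial ℝ) : Multiset ℂ :=
  (p.map (algebraMap ℝ ℂ)).roots

/-!
Since `Λ_α` depends on `s` only and the `s`-equation does not involve `x`, the linearisation of the
compactified field at `(η⁺, 1)` is block upper triangular with diagonal blocks `r⁻¹ D_x f(η⁺, λ⁺)`
and `-α`. Its spectrum is therefore that of `D_x f(η⁺, λ⁺)`, scaled by `r⁻¹ > 0`, together with the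
negative eigenvalue `-α`.

The point is that the off-diagonal block exists, i.e. that `Λ_α` is differentiable at the endpoint
`s = 1`. On `(-1, 1)` one has `exp (α h_α(s)) = (1 + s) / (1 - s)`, hence
`Λ_α'(s) = 2 / (α (1 + s)²) · exp (α h_α(s)) Λ'(h_α(s))`: the pole of `h_α'` at `1` is absorbed by
the exponential weight, and for `α ≤ ρ` the right-hand side converges as `s → 1`. The mean value
theorem turns this limit into a one-sided derivative.
-/

section Charpoly

open Polynomial

theorem matrix_charpolyRev_smul {R ι : Type*} [CommRing R] [Fintype ι] [DecidableEq ι]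
    (c : R) (M : Matrix ι ι R) : (c • M).charpolyRev = M.charpolyRev.comp (C c * X) := by
  rw [Matrix.charpolyRev, Matrix.charpolyRev, ← coe_compRingHom_apply, RingHom.map_det]
  congr 1
  ext i j : 1
  by_cases h : i = j <;> simp [h] <;> ring

-- Over a ring, `c` cannot be divided out of `X - c • M`, but `1 - X • (c • M)` arises from
-- `1 - X • M` by the substitution `X ↦ c X`.
theorem matrix_charpoly_smul {R ι : Type*} [CommRing R] [Fintype ι] [DecidableEq ι]
    (c : R) (M : Matrix ι ι R) : (c • M).charpoly = M.charpoly.scaleRoots c := by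
  nontriviality R
  have hcoeff (N : Matrix ι ι R) {i : ℕ} (hi : i ≤ Fintype.card ι) :
      N.charpoly.coeff i = N.charpolyRev.coeff (Fintype.card ι - i) := by
    rw [← Matrix.reverse_charpoly, coeff_reverse, Matrix.charpoly_natDegree_eq_dim,
      revAt_le (Nat.sub_le _ _), Nat.sub_sub_self hi]
  ext i
  rw [coeff_scaleRoots, Matrix.charpoly_natDegree_eq_dim]
  rcases le_or_gt i (Fintype.card ι) with hi | hi
  · rw [hcoeff _ hi, hcoeff _ hi, matrix_charpolyRev_smul, comp_C_mul_X_coeff]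
  · rw [coeff_eq_zero_of_natDegree_lt (by rwa [Matrix.charpoly_natDegree_eq_dim]),
      coeff_eq_zero_of_natDegree_lt (by rwa [Matrix.charpoly_natDegree_eq_dim]), zero_mul]

variable {R M N : Type*} [CommRing R] [AddCommGroup M] [Module R M] [Module.Free R M]
  [Module.Finite R M] [AddCommGroup N] [Module R N] [Module.Free R N] [Module.Finite R N]

theorem charpoly_smul (c : R) (A : M →ₗ[R] M) :
    (c • A).charpoly = A.charpoly.scaleRoots c := by
  rw [LinearMap.charpoly, map_smul, matrix_charpoly_smul, LinearMap.charpoly]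

theorem charpoly_coprod_prod_comp_snd (A : M →ₗ[R] M) (B : N →ₗ[R] M) (D : N →ₗ[R] N) :
    ((A.coprod B).prod (D ∘ₗ LinearMap.snd R M N)).charpoly = A.charpoly * D.charpoly := by
  let b := Module.Free.chooseBasis R M
  let b' := Module.Free.chooseBasis R N
  have hblock : LinearMap.toMatrix (b.prod b') (b.prod b')
      ((A.coprod B).prod (D ∘ₗ LinearMap.snd R M N)) =
      Matrix.fromBlocks (LinearMap.toMatrix b b A) (LinearMap.toMatrix b' b B) 0
        (LinearMap.toMatrix b' b' D) := by
    ext (i | i) (j | j) <;> simp [LinearMap.toMatrix_apply]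
  rw [← LinearMap.charpoly_toMatrix _ (b.prod b'), hblock, Matrix.charpoly_fromBlocks_zero₂₁,
    LinearMap.charpoly_toMatrix, LinearMap.charpoly_toMatrix]

theorem charpoly_toSpanSingleton_self (c : R) :
    (LinearMap.toSpanSingleton R R c).charpoly = X - C c := by
  rw [← LinearMap.charpoly_toMatrix _ (Module.Basis.singleton Unit R)]
  simp [Matrix.charpoly, Matrix.charmatrix, LinearMap.toMatrix_apply]

end Charpoly

section ComplexRoots

variable {E : Type*} [AddCommGroup E] [Module ℝ E] [FiniteDimensional ℝ E]

theorem complexRoots_charpoly_smul (A : E →ₗ[ℝ] E) {c : ℝ} (hc : c ≠ 0) :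
    complexRoots (c • A).charpoly = (complexRoots A.charpoly).map (fun z ↦ (c : ℂ) * z) := by
  rw [complexRoots, charpoly_smul,
    Polynomial.map_scaleRoots _ _ _ (by simp [A.charpoly_monic.leadingCoeff])]
  exact Polynomial.roots_scaleRoots _ (by simpa using hc)

theorem card_filter_complexRoots_charpoly_le (A : E →ₗ[ℝ] E) (p : ℂ → Prop) [DecidablePred p] :
    ((complexRoots A.charpoly).filter p).card ≤ Module.finrank ℝ E :=
  calc ((complexRoots A.charpoly).filter p).card
    _ ≤ (complexRoots A.charpoly).card := Multiset.card_le_card (Multiset.filter_le _ _)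
    _ = A.charpoly.natDegree := IsAlgClosed.card_aroots_eq_natDegree
    _ = Module.finrank ℝ E := A.charpoly_natDegree

end ComplexRoots

theorem card_filter_re_pos_map_mul_add_singleton {c b : ℝ} (hc : 0 < c) (hb : b ≤ 0)
    (S : Multiset ℂ) :
    ((S.map (fun z ↦ (c : ℂ) * z) + {(b : ℂ)}).filter (fun z ↦ 0 < z.re)).card =
      (S.filter (fun z ↦ 0 < z.re)).card := by
  simp [Multiset.filter_map, Multiset.filter_singleton, hc, hb]

theorem card_filter_re_neg_map_mul_add_singleton {c b : ℝ} (hc : 0 < c) (hb : b < 0)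
    (S : Multiset ℂ) :
    ((S.map (fun z ↦ (c : ℂ) * z) + {(b : ℂ)}).filter (fun z ↦ z.re < 0)).card =
      (S.filter (fun z ↦ z.re < 0)).card + 1 := by
  simp [Multiset.filter_map, Multiset.filter_singleton, hb, mul_neg_iff, hc, hc.not_gt]

theorem exp_mul_hcomp {α s : ℝ} (hα : α ≠ 0) (hs : s ∈ Set.Ioo (-1) 1) :
    Real.exp (α * hcomp α s) = (1 + s) / (1 - s) := by
  rw [hcomp, ← mul_assoc, mul_one_div_cancel hα, one_mul,
    Real.exp_log (div_pos (by linarith [hs.1]) (by linarith [hs.2]))]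

theorem hasDerivAt_hcomp {α s : ℝ} (hα : α ≠ 0) (hs : s ∈ Set.Ioo (-1) 1) :
    HasDerivAt (hcomp α) (2 / (α * ((1 + s) * (1 - s)))) s := by
  have hadd : 0 < 1 + s := by linarith [hs.1]
  have hsub : 0 < 1 - s := by linarith [hs.2]
  have hquot : HasDerivAt (fun t ↦ (1 + t) / (1 - t)) (2 / (1 - s) ^ 2) s := by
    refine (((hasDerivAt_id s).const_add 1).div ((hasDerivAt_id s).const_sub 1)
      hsub.ne').congr_deriv ?_
    simp only [id]
    ring
  refine ((hquot.log (div_pos hadd hsub).ne').const_mul (1 / α)).congr_deriv ?_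
  field_simp

theorem tendsto_hcomp_nhdsLT_one {α : ℝ} (hα : 0 < α) :
    Tendsto (hcomp α) (𝓝[<] 1) atTop := by
  have hnum : Tendsto (fun s : ℝ ↦ 1 + s) (𝓝[<] 1) (𝓝 (1 + 1)) :=
    (Continuous.tendsto (by fun_prop) 1).mono_left nhdsWithin_le_nhds
  have hden : Tendsto (fun s : ℝ ↦ 1 - s) (𝓝[<] 1) (𝓝[>] 0) := by
    refine tendsto_nhdsWithin_iff.mpr ⟨?_, ?_⟩
    · exact (Continuous.tendsto' (by fun_prop) 1 0 (sub_self 1)).mono_left nhdsWithin_le_nhds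
    · filter_upwards [self_mem_nhdsWithin] with s hs using sub_pos.mpr (Set.mem_Iio.mp hs)
  have hquot : Tendsto (fun s : ℝ ↦ (1 + s) / (1 - s)) (𝓝[<] 1) atTop :=
    hnum.pos_mul_atTop (by norm_num) (tendsto_inv_nhdsGT_zero.comp hden)
  exact (Real.tendsto_log_atTop.comp hquot).const_mul_atTop (one_div_pos.mpr hα)

section CompactifiedInput

variable {V : Type*} [NormedAddCommGroup V] [NormedSpace ℝ V]

theorem exists_tendsto_exp_mul_smul_of_le {u : ℝ → V} {K : V} {α ρ : ℝ} (hαρ : α ≤ ρ)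
    (hu : Tendsto (fun τ ↦ Real.exp (ρ * τ) • u τ) atTop (𝓝 K)) :
    ∃ K', Tendsto (fun τ ↦ Real.exp (α * τ) • u τ) atTop (𝓝 K') := by
  rcases hαρ.eq_or_lt with rfl | hlt
  · exact ⟨K, hu⟩
  have hdecay : Tendsto (fun τ : ℝ ↦ Real.exp (-((ρ - α) * τ))) atTop (𝓝 0) :=
    Real.tendsto_exp_neg_atTop_nhds_zero.comp (tendsto_id.const_mul_atTop (sub_pos.mpr hlt))
  refine ⟨(0 : ℝ) • K, (hdecay.smul hu).congr fun τ ↦ ?_⟩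
  rw [smul_smul, ← Real.exp_add]
  ring_nf

theorem hasDerivAt_comp_hcomp {Λ : ℝ → V} {α s : ℝ} (hα : α ≠ 0) (hs : s ∈ Set.Ioo (-1) 1)
    (hΛ : DifferentiableAt ℝ Λ (hcomp α s)) :
    HasDerivAt (Λ ∘ hcomp α)
      ((2 / (α * (1 + s) ^ 2)) • (Real.exp (α * hcomp α s) • deriv Λ (hcomp α s))) s := by
  have hadd : 1 + s ≠ 0 := by linarith [hs.1]
  have hsub : 1 - s ≠ 0 := by linarith [hs.2]
  refine (hΛ.hasDerivAt.scomp s (hasDerivAt_hcomp hα hs)).congr_deriv ?_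
  rw [exp_mul_hcomp hα hs, smul_smul]
  congr 1
  field_simp

theorem hasDerivWithinAt_of_eqOn_comp_hcomp {Λ μ : ℝ → V} {K : V} {α : ℝ} (hα : 0 < α)
    (hΛ : ∀ᶠ τ in atTop, DifferentiableAt ℝ Λ τ) (hlim : Tendsto Λ atTop (𝓝 (μ 1)))
    (hderiv : Tendsto (fun τ ↦ Real.exp (α * τ) • deriv Λ τ) atTop (𝓝 K))
    (hμ : Set.EqOn μ (Λ ∘ hcomp α) (Set.Ioo (-1) 1)) :
    HasDerivWithinAt μ ((1 / (2 * α)) • K) (Set.Iic 1) 1 := by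
  have hh := tendsto_hcomp_nhdsLT_one hα
  have hI : Set.Ioo (-1 : ℝ) 1 ∈ 𝓝[<] 1 := Ioo_mem_nhdsLT (by norm_num)
  have hμ_lim : Tendsto μ (𝓝[<] 1) (𝓝 (μ 1)) :=
    (hlim.comp hh).congr' (hμ.eventuallyEq_of_mem hI).symm
  have hμ' : ∀ᶠ s in 𝓝[<] 1, HasDerivAt μ
      ((2 / (α * (1 + s) ^ 2)) • (Real.exp (α * hcomp α s) • deriv Λ (hcomp α s))) s := by
    filter_upwards [hI, hh.eventually hΛ] with s hs hΛs
    exact (hasDerivAt_comp_hcomp hα.ne' hs hΛs).congr_of_eventuallyEq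
      (hμ.eventuallyEq_of_mem (isOpen_Ioo.mem_nhds hs))
  have hcoeff : Tendsto (fun s : ℝ ↦ 2 / (α * (1 + s) ^ 2)) (𝓝[<] 1)
      (𝓝 (1 / (2 * α))) := by
    have hone : 2 / (α * (1 + 1) ^ 2) = 1 / (2 * α) := by
      field_simp
      norm_num
    have hcont : ContinuousAt (fun s : ℝ ↦ 2 / (α * (1 + s) ^ 2)) 1 :=
      ContinuousAt.div (by fun_prop) (by fun_prop) (by positivity)
    exact hone ▸ hcont.tendsto.mono_left nhdsWithin_le_nhds
  refine hasDerivWithinAt_Iic_of_tendsto_deriv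
    (s := {s | DifferentiableAt ℝ μ s} ∩ Set.Iio 1)
    (fun s hs ↦ hs.1.differentiableWithinAt)
    (hμ_lim.mono_left (nhdsWithin_mono _ Set.inter_subset_right))
    (inter_mem (hμ'.mono fun s hs ↦ hs.differentiableAt) self_mem_nhdsWithin) ?_
  exact (hcoeff.smul (hderiv.comp hh)).congr' (hμ'.mono fun s hs ↦ hs.deriv.symm)

end CompactifiedInput

section CompactifiedField

variable {E V : Type*} [NormedAddCommGroup E] [NormedSpace ℝ E] [NormedAddCommGroup V]
  [NormedSpace ℝ V]

/-- The linearisation of a skew product `ẋ = f(x, s)`, `ṡ = q(s)` with scalar base variable `s`: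
the block triangular map `(x, s) ↦ (A x + s w, s b)`. -/
noncomputable def skewLinearization (A : E →L[ℝ] E) (w : E) (b : ℝ) : E × ℝ →L[ℝ] E × ℝ :=
  (A.coprod (.toSpanSingleton ℝ w)).prod (.toSpanSingleton ℝ b ∘L .snd ℝ E ℝ)

theorem charpoly_skewLinearization [FiniteDimensional ℝ E] (A : E →L[ℝ] E) (w : E) (b : ℝ) :
    (skewLinearization A w b).toLinearMap.charpoly =
      A.toLinearMap.charpoly * (Polynomial.X - Polynomial.C b) := by
  rw [← charpoly_toSpanSingleton_self]
  exact charpoly_coprod_prod_comp_snd A.toLinearMap (LinearMap.toSpanSingleton ℝ E w) _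

theorem complexRoots_charpoly_skewLinearization [FiniteDimensional ℝ E] (A : E →L[ℝ] E) (w : E)
    (b : ℝ) :
    complexRoots (skewLinearization A w b).toLinearMap.charpoly =
      complexRoots A.toLinearMap.charpoly + {(b : ℂ)} := by
  have hne := (A.toLinearMap.charpoly_monic.mul (Polynomial.monic_X_sub_C b)).ne_zero
  rw [charpoly_skewLinearization]
  exact (Polynomial.aroots_mul hne).trans (congrArg _ (Polynomial.aroots_X_sub_C b))

theorem hasFDerivWithinAt_skewProduct {f : E × V → E} {f' : E × V →L[ℝ] E} {μ : ℝ → V} {v : V}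
    {q : ℝ → ℝ} {q' s : ℝ} {t : Set ℝ} {x : E} (hf : HasFDerivAt f f' (x, μ s))
    (hμ : HasDerivWithinAt μ v t s) (hq : HasDerivWithinAt q q' t s) :
    HasFDerivWithinAt (fun p : E × ℝ ↦ (f (p.1, μ p.2), q p.2))
      (skewLinearization (f' ∘L .inl ℝ E V) (f' (0, v)) q') (Set.univ ×ˢ t) (x, s) := by
  have hsnd : HasFDerivWithinAt (Prod.snd : E × ℝ → ℝ) (.snd ℝ E ℝ) (Set.univ ×ˢ t) (x, s) :=
    hasFDerivWithinAt_snd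
  have hmaps : Set.MapsTo (Prod.snd : E × ℝ → ℝ) (Set.univ ×ˢ t) t := fun p hp ↦ hp.2
  have hpair := hasFDerivWithinAt_fst.prodMk (hμ.hasFDerivWithinAt.comp (x, s) hsnd hmaps)
  have hfield := (hf.comp_hasFDerivWithinAt (x, s) hpair).prodMk
    (hq.hasFDerivWithinAt.comp (x, s) hsnd hmaps)
  refine hfield.congr_fderiv ?_
  ext <;> simp [skewLinearization, Prod.mk_zero_zero]

theorem stmt9_general [FiniteDimensional ℝ E] {f : E × V → E} {Λ μ : ℝ → V} {lp K : V} {η : E}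
    {r α ρ : ℝ} (hf : DifferentiableAt ℝ f (η, lp)) (hΛ : ∀ᶠ τ in atTop, DifferentiableAt ℝ Λ τ)
    (hp : Tendsto Λ atTop (𝓝 lp))
    (hdecay : Tendsto (fun τ ↦ Real.exp (ρ * τ) • deriv Λ τ) atTop (𝓝 K))
    (hr : 0 < r) (hα : α ∈ Set.Ioc 0 ρ)
    (hμ : Set.EqOn μ (Λ ∘ hcomp α) (Set.Ioo (-1) 1)) (hμ1 : μ 1 = lp) :
    ∃ L : E × ℝ →L[ℝ] E × ℝ,
      HasFDerivWithinAt (fun p : E × ℝ ↦ (r⁻¹ • f (p.1, μ p.2), α * (1 - p.2 ^ 2) / 2)) L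
        (Set.univ ×ˢ Set.Icc (-1) 1) (η, 1) ∧
      ((complexRoots L.toLinearMap.charpoly).filter (fun z ↦ 0 < z.re)).card =
        ((complexRoots (fderiv ℝ (fun x ↦ f (x, lp)) η).toLinearMap.charpoly).filter
          (fun z ↦ 0 < z.re)).card ∧
      ((complexRoots L.toLinearMap.charpoly).filter (fun z ↦ z.re < 0)).card =
        ((complexRoots (fderiv ℝ (fun x ↦ f (x, lp)) η).toLinearMap.charpoly).filter
          (fun z ↦ z.re < 0)).card + 1 := by
  subst hμ1
  obtain ⟨K', hK'⟩ := exists_tendsto_exp_mul_smul_of_le hα.2 hdecay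
  have hinput := (hasDerivWithinAt_of_eqOn_comp_hcomp hα.1 hΛ hp hK' hμ).mono
    (Set.Icc_subset_Iic_self (a := -1))
  have htime : HasDerivAt (fun s : ℝ ↦ α * (1 - s ^ 2) / 2) (-α) 1 := by
    refine (((((hasDerivAt_id 1).pow 2).const_sub 1).const_mul α).div_const 2).congr_deriv ?_
    simp
    ring
  have hA : fderiv ℝ (fun x ↦ f (x, μ 1)) η = fderiv ℝ f (η, μ 1) ∘L .inl ℝ E V :=
    (hf.hasFDerivAt.comp η (hasFDerivAt_prodMk_left η (μ 1))).fderiv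
  have hroots (w : E) : complexRoots (skewLinearization
        (r⁻¹ • fderiv ℝ (fun x ↦ f (x, μ 1)) η) w (-α)).toLinearMap.charpoly =
      (complexRoots (fderiv ℝ (fun x ↦ f (x, μ 1)) η).toLinearMap.charpoly).map
        (fun z ↦ ((r⁻¹ : ℝ) : ℂ) * z) + {((-α : ℝ) : ℂ)} := by
    rw [complexRoots_charpoly_skewLinearization, ContinuousLinearMap.toLinearMap_smul,
      complexRoots_charpoly_smul _ (inv_ne_zero hr.ne')]
  have hL := hasFDerivWithinAt_skewProduct (hf.hasFDerivAt.const_smul r⁻¹) hinput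
    htime.hasDerivWithinAt
  rw [ContinuousLinearMap.smul_comp, ← hA] at hL
  refine ⟨_, hL, ?_, ?_⟩
  · rw [hroots, card_filter_re_pos_map_mul_add_singleton (inv_pos.mpr hr)
      (neg_nonpos.mpr hα.1.le)]
  · rw [hroots, card_filter_re_neg_map_mul_add_singleton (inv_pos.mpr hr) (neg_lt_zero.mpr hα.1)]

end CompactifiedField

theorem compInput_one {d : ℕ} (Λ : ℝ → Fin d → ℝ) (lp lm : Fin d → ℝ) (α : ℝ) :
    compInput Λ lp lm α 1 = lp :=
  if_pos rfl

theorem eqOn_compInput_comp_hcomp {d : ℕ} (Λ : ℝ → Fin d → ℝ) (lp lm : Fin d → ℝ) (α : ℝ) :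
    Set.EqOn (compInput Λ lp lm α) (Λ ∘ hcomp α) (Set.Ioo (-1) 1) := fun s hs ↦ by
  simp [compInput, hs.1.ne', hs.2.ne]

/-- If `η⁺` is a regular edge state of the future limit system (the
characteristic polynomial of `D_x f(η⁺,λ⁺)` has exactly one complex root, with multiplicity,
of positive real part and its remaining `n-1` roots have negative real part), then for every
`r > 0` and `α ∈ (0,ρ]`, the characteristic polynomial of the derivative of `F_{r,α}` at
`(η⁺,1)` has exactly one complex root of positive real part and its remaining `n` complex
roots all have negative real part. -/
theorem stmt9 {n d : ℕ} (f : (Fin n → ℝ) × (Fin d → ℝ) → Fin n → ℝ)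
    (hf : ContDiff ℝ 1 f)
    (Λ : ℝ → Fin d → ℝ) (ρ : ℝ) (hρ : 0 < ρ)
    (hΛ : ContDiff ℝ 1 Λ) (hbac : ExpBiAsympConst Λ ρ)
    (lp lm : Fin d → ℝ)
    (hp : Tendsto Λ atTop (𝓝 lp)) (hm : Tendsto Λ atBot (𝓝 lm))
    (ηp : Fin n → ℝ) (heq : f (ηp, lp) = 0)
    (hpos : (Multiset.filter (fun z : ℂ => 0 < z.re)
        (complexRoots (fderiv ℝ (fun x => f (x, lp)) ηp).toLinearMap.charpoly)).card = 1)
    (hneg : (Multiset.filter (fun z : ℂ => z.re < 0)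
        (complexRoots (fderiv ℝ (fun x => f (x, lp)) ηp).toLinearMap.charpoly)).card
        = n - 1) :
    ∀ r > (0 : ℝ), ∀ α ∈ Set.Ioc (0 : ℝ) ρ,
      ∃ L : ((Fin n → ℝ) × ℝ) →L[ℝ] ((Fin n → ℝ) × ℝ),
        HasFDerivWithinAt (compField f Λ lp lm r α) L (compDomain n) (ηp, 1) ∧
        (Multiset.filter (fun z : ℂ => 0 < z.re)
          (complexRoots L.toLinearMap.charpoly)).card = 1 ∧
        (Multiset.filter (fun z : ℂ => z.re < 0)
          (complexRoots L.toLinearMap.charpoly)).card = n := by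
  intro r hr α hα
  obtain ⟨⟨K, hK⟩, -⟩ := hbac
  obtain ⟨L, hL, hLpos, hLneg⟩ := stmt9_general (hf.differentiable one_ne_zero _)
    (.of_forall (hΛ.differentiable one_ne_zero)) hp hK hr hα
    (eqOn_compInput_comp_hcomp Λ lp lm α) (compInput_one Λ lp lm α)
  have hn : 1 ≤ n := by
    simpa only [hpos, Module.finrank_fin_fun] using card_filter_complexRoots_charpoly_le
      (fderiv ℝ (fun x ↦ f (x, lp)) ηp).toLinearMap (fun z : ℂ ↦ 0 < z.re)
  exact ⟨L, hL, hLpos.trans hpos, by rw [hLneg, hneg, Nat.sub_add_cancel hn]⟩
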